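/- Let m ≥ 2 and Δ ≥ 3 be integers and let 1 ≤ k ≤ m. Let G be the tree on n = m + Δ vertices obtained from the path p_1 p_2 … p_m by adding new vertices u, l_1, …, l_{Δ−1} together with the edge p_k u and the edges u l_i (1 ≤ i ≤ Δ−1) (a Δ-star appended by one of its leaves onto the vertex p_k of the path). If at least one of the following holds: (1) m ≠ 4, or (2) m = 4 and 2 ≤ k ≤ 3, or (3) m = 4, k ∈ {1, 4} and Δ ≥ 4, then γ^ID(G) ≤ ((Δ−1)/Δ)·n. -/

import Mathlib

open SimpleGraph

/-- The closed neighborhood `N[v]` of a vertex `v` in `G`. -/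
def closedNbhd {V : Type*} (G : SimpleGraph V) (v : V) : Set V :=
  insert v (G.neighborSet v)

/-- `C` is an identifying code of `G`: it dominates every vertex and the
closed neighborhoods of distinct vertices intersect `C` differently. -/
def IsIDCode {V : Type*} (G : SimpleGraph V) (C : Set V) : Prop :=
  (∀ v, (closedNbhd G v ∩ C).Nonempty) ∧
  ∀ u w : V, u ≠ w → closedNbhd G u ∩ C ≠ closedNbhd G w ∩ C

/-- The identification number `γ^ID(G)`: the minimum size of an identifying code. -/
noncomputable def idNum {V : Type*} [Fintype V] (G : SimpleGraph V) : ℕ :=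
  sInf {k | ∃ C : Set V, C.ncard = k ∧ IsIDCode G C}

/-- `G` is identifiable (closed-twin-free). -/
def Identifiable {V : Type*} (G : SimpleGraph V) : Prop :=
  ∀ u w : V, u ≠ w → closedNbhd G u ≠ closedNbhd G w

/-- The maximum degree of a finite graph `G`. -/
noncomputable def maxDeg {V : Type*} [Fintype V] (G : SimpleGraph V) : ℕ :=
  Finset.univ.sup fun v => (G.neighborSet v).ncard

/-- `S` is a dominating set of `G`. -/
def IsDomSet {V : Type*} (G : SimpleGraph V) (S : Set V) : Prop :=
  ∀ v, (closedNbhd G v ∩ S).Nonempty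

/-- The domination number `γ(G)`. -/
noncomputable def domNum {V : Type*} [Fintype V] (G : SimpleGraph V) : ℕ :=
  sInf {k | ∃ S : Set V, S.ncard = k ∧ IsDomSet G S}

/-- The star `K_{1,k}`: vertex `0` is adjacent to each of the `k` other vertices. -/
def starGraph (k : ℕ) : SimpleGraph (Fin (k + 1)) :=
  SimpleGraph.fromRel fun a _ => a = 0

/-- The graph obtained from `G'` by appending a star with `k` extra leaves onto the
vertex `v`: we add a new universal vertex `u = Sum.inr none` adjacent to `v`,
and `k` new leaves `Sum.inr (some i)` adjacent to `u` (so the star has `k + 1`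
leaves in total, one of which is identified with `v`, i.e. a `(k+1)`-star is
appended by one of its leaves onto `v`). -/
def appendStar {V : Type*} (G' : SimpleGraph V) (v : V) (k : ℕ) :
    SimpleGraph (V ⊕ Option (Fin k)) :=
  SimpleGraph.fromRel fun a b =>
    (∃ x y, a = Sum.inl x ∧ b = Sum.inl y ∧ G'.Adj x y) ∨
    (a = Sum.inl v ∧ b = Sum.inr none) ∨
    (∃ i, a = Sum.inr none ∧ b = Sum.inr (some i))

/-! Write `p₁, …, p_m` as `0, …, m - 1`. Start from a set `C` of path vertices and add all the new
vertices but one, which costs `Δ - 1`; it remains to have `C` of size at most `(Δ - 1) / Δ * m`.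

If `u` is left out, the leaves tell all new vertices apart and miss the path altogether, so any
identifying code `C` of the path will do. The even vertices form one for odd `m`; for even `m` the
only clash is between the last two vertices, and adding `m - 3` resolves it. The size `m / 2 + 1` is
small enough unless `m = 2`, where the path has no identifying code, or `m = 4` and `Δ = 3`.

If a leaf is left out, then `u` is in the code and singles out `p_k` among the path vertices. So `C`
only has to contain `p_k`, dominate the path and separate the other path vertices: `{p_k}` works for
`m = 2`, and the two middle vertices work for `m = 4`. -/

section Trace

variable {V : Type*} {G : SimpleGraph V} {C : Set V} {a b c : V}

theorem mem_closedNbhd : c ∈ closedNbhd G a ↔ c = a ∨ G.Adj a c := Iff.rfl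

variable (G C a b) in
/-- The vertices `a` and `b` have the same trace `N[a] ∩ C = N[b] ∩ C` on `C`, i.e. `C` does not
separate them. It is stated elementwise, so that each `c ∈ C` can be tested directly. -/
def SameTrace : Prop :=
  ∀ c ∈ C, (c ∈ closedNbhd G a ↔ c ∈ closedNbhd G b)

theorem closedNbhd_inter_eq_iff_sameTrace :
    closedNbhd G a ∩ C = closedNbhd G b ∩ C ↔ SameTrace G C a b := by
  simp only [SameTrace, Set.ext_iff, Set.mem_inter_iff, and_congr_left_iff]

theorem SameTrace.symm (h : SameTrace G C a b) : SameTrace G C b a :=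
  fun c hc => (h c hc).symm

theorem isIDCode_iff :
    IsIDCode G C ↔ IsDomSet G C ∧ ∀ a b, SameTrace G C a b → a = b := by
  simp only [IsIDCode, IsDomSet, ne_eq, closedNbhd_inter_eq_iff_sameTrace, not_imp_not]

theorem IsIDCode.idNum_le [Fintype V] (hC : IsIDCode G C) : idNum G ≤ C.ncard :=
  Nat.sInf_le ⟨C, rfl, hC⟩

end Trace

section AppendStar

variable {V : Type*} {G : SimpleGraph V} {C : Set V} {v x y : V} {k : ℕ} {i j : Fin k}
  {o : Option (Fin k)}

@[simp]
theorem appendStar_adj_inl_inl : (appendStar G v k).Adj (.inl x) (.inl y) ↔ G.Adj x y := by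
  simpa [appendStar, G.adj_comm y x] using G.ne_of_adj

@[simp]
theorem appendStar_adj_inl_none : (appendStar G v k).Adj (.inl x) (.inr none) ↔ x = v := by
  simp [appendStar]

@[simp]
theorem appendStar_adj_none_inl : (appendStar G v k).Adj (.inr none) (.inl x) ↔ x = v := by
  simp [appendStar]

@[simp]
theorem not_appendStar_adj_inl_some : ¬(appendStar G v k).Adj (.inl x) (.inr (some i)) := by
  simp [appendStar]

@[simp]
theorem not_appendStar_adj_some_inl : ¬(appendStar G v k).Adj (.inr (some i)) (.inl x) := by
  simp [appendStar]

@[simp]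
theorem appendStar_adj_none_some : (appendStar G v k).Adj (.inr none) (.inr (some i)) := by
  simp [appendStar]

@[simp]
theorem appendStar_adj_some_none : (appendStar G v k).Adj (.inr (some i)) (.inr none) := by
  simp [appendStar]

@[simp]
theorem not_appendStar_adj_some_some :
    ¬(appendStar G v k).Adj (.inr (some i)) (.inr (some j)) := by
  simp [appendStar]

/-- The candidate code of `appendStar G v k` made of a set `C` of vertices of `G` and all the new
vertices except `o`. -/
def appendCode (C : Set V) (o : Option (Fin k)) : Set (V ⊕ Option (Fin k)) :=
  Sum.inl '' C ∪ Sum.inr '' {o}ᶜ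

@[simp]
theorem inl_mem_appendCode : .inl x ∈ appendCode C o ↔ x ∈ C := by
  simp [appendCode]

@[simp]
theorem inr_mem_appendCode {o' : Option (Fin k)} : .inr o' ∈ appendCode C o ↔ o' ≠ o := by
  simp [appendCode]

theorem ncard_appendCode_le (C : Set V) (o : Option (Fin k)) :
    (appendCode C o).ncard ≤ C.ncard + k := by
  have hcompl : ({o}ᶜ : Set (Option (Fin k))).ncard = k := by
    rw [Set.ncard_compl, Set.ncard_singleton, Nat.card_eq_fintype_card, Fintype.card_option,
      Fintype.card_fin, Nat.add_sub_cancel]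
  calc (appendCode C o).ncard
      ≤ (Sum.inl '' C).ncard + (Sum.inr '' {o}ᶜ).ncard := Set.ncard_union_le _ _
    _ = C.ncard + k := by
      rw [Set.ncard_image_of_injective _ Sum.inl_injective,
        Set.ncard_image_of_injective _ Sum.inr_injective, hcompl]

theorem IsDomSet.isDomSet_appendCode (hC : IsDomSet G C) (hk : 0 < k) (o : Option (Fin k)) :
    IsDomSet (appendStar G v k) (appendCode C o) := by
  rintro (x | o')
  · obtain ⟨c, hcx, hcC⟩ := hC x
    exact ⟨.inl c, by simpa [mem_closedNbhd] using hcx, by simpa using hcC⟩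
  · obtain hne | rfl := ne_or_eq o' o
    · exact ⟨.inr o', by simp [mem_closedNbhd], by simpa using hne⟩
    · obtain _ | i := o'
      · exact ⟨.inr (some ⟨0, hk⟩), by simp [mem_closedNbhd], by simp⟩
      · exact ⟨.inr none, by simp [mem_closedNbhd], by simp⟩

theorem SameTrace.of_appendStar
    (h : SameTrace (appendStar G v k) (appendCode C o) (.inl x) (.inl y)) : SameTrace G C x y :=
  fun c hc => by simpa [mem_closedNbhd] using h (.inl c) (by simpa using hc)

theorem isIDCode_appendCode (hdom : IsDomSet G C) (hk : 0 < k)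
    (hinl : ∀ x y, SameTrace (appendStar G v k) (appendCode C o) (.inl x) (.inl y) → x = y)
    (hmixed : ∀ x p, ¬SameTrace (appendStar G v k) (appendCode C o) (.inl x) (.inr p))
    (hinr : ∀ p q, SameTrace (appendStar G v k) (appendCode C o) (.inr p) (.inr q) → p = q) :
    IsIDCode (appendStar G v k) (appendCode C o) := by
  refine isIDCode_iff.2 ⟨hdom.isDomSet_appendCode hk o, ?_⟩
  rintro (x | p) (y | q) h
  · rw [hinl x y h]
  · exact (hmixed x q h).elim
  · exact (hmixed y p h.symm).elim
  · rw [hinr p q h]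

theorem IsIDCode.isIDCode_appendCode_none (hC : IsIDCode G C) (hk : 2 ≤ k) :
    IsIDCode (appendStar G v k) (appendCode C (none : Option (Fin k))) := by
  have : Nontrivial (Fin k) := Fin.nontrivial_iff_two_le.2 hk
  have hC := isIDCode_iff.1 hC
  have not_none_leaf (i : Fin k) : ¬SameTrace (appendStar G v k)
      (appendCode C (none : Option (Fin k))) (.inr none) (.inr (some i)) := fun h => by
    obtain ⟨j, hji⟩ := exists_ne i
    simpa [mem_closedNbhd, hji] using h (.inr (some j)) (by simp)
  refine isIDCode_appendCode hC.1 (by omega) (fun x y h => hC.2 x y h.of_appendStar) ?_ ?_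
  · rintro x (_ | i) h
    · simpa [mem_closedNbhd] using h (.inr (some ⟨0, by omega⟩)) (by simp)
    · simpa [mem_closedNbhd] using h (.inr (some i)) (by simp)
  · rintro (_ | i) (_ | j) h
    · rfl
    · exact (not_none_leaf j h).elim
    · exact (not_none_leaf i h.symm).elim
    · simpa [mem_closedNbhd] using h (.inr (some i)) (by simp)

theorem IsDomSet.isIDCode_appendCode_some (hC : IsDomSet G C) (hv : v ∈ C)
    (hsep : ∀ x y, x ≠ v → y ≠ v → SameTrace G C x y → x = y) (hk : 2 ≤ k) (i : Fin k) :
    IsIDCode (appendStar G v k) (appendCode C (some i)) := by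
  have : Nontrivial (Fin k) := Fin.nontrivial_iff_two_le.2 hk
  have not_none_leaf (j : Fin k) :
      ¬SameTrace (appendStar G v k) (appendCode C (some i)) (.inr none) (.inr (some j)) :=
    fun h => by simpa [mem_closedNbhd] using h (.inl v) (by simpa using hv)
  refine isIDCode_appendCode hC (by omega) (fun x y h => ?_) ?_ ?_
  · have hcentre : x = v ↔ y = v := by simpa [mem_closedNbhd] using h (.inr none) (by simp)
    by_cases hx : x = v
    · rw [hx, hcentre.1 hx]
    · exact hsep x y hx (hcentre.not.1 hx) h.of_appendStar
  · rintro x (_ | j) h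
    · obtain ⟨j, hji⟩ := exists_ne i
      simpa [mem_closedNbhd] using h (.inr (some j)) (by simpa using hji)
    · obtain rfl : x = v := by simpa [mem_closedNbhd] using h (.inr none) (by simp)
      simpa [mem_closedNbhd] using h (.inl x) (by simpa using hv)
  · rintro (_ | j) (_ | l) h
    · rfl
    · exact (not_none_leaf l h).elim
    · exact (not_none_leaf j h.symm).elim
    · by_contra! hjl
      obtain hj | hl : j ≠ i ∨ l ≠ i := by grind
      · exact hjl (by simpa [mem_closedNbhd] using h (.inr (some j)) (by simpa using hj))
      · exact hjl (by simpa [mem_closedNbhd, eq_comm] using h (.inr (some l)) (by simpa using hl))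

variable [Fintype V]

theorem IsIDCode.idNum_appendStar_le (hC : IsIDCode G C) (hk : 2 ≤ k) (v : V) :
    idNum (appendStar G v k) ≤ C.ncard + k :=
  (hC.isIDCode_appendCode_none hk).idNum_le.trans (ncard_appendCode_le C _)

theorem IsDomSet.idNum_appendStar_le (hC : IsDomSet G C) (hv : v ∈ C)
    (hsep : ∀ x y, x ≠ v → y ≠ v → SameTrace G C x y → x = y) (hk : 2 ≤ k) :
    idNum (appendStar G v k) ≤ C.ncard + k :=
  (hC.isIDCode_appendCode_some hv hsep hk ⟨0, by omega⟩).idNum_le.trans (ncard_appendCode_le C _)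

end AppendStar

section Path

variable {m k : ℕ}

theorem mem_closedNbhd_pathGraph {i j : Fin m} :
    i ∈ closedNbhd (pathGraph m) j ↔ i.val = j.val ∨ j.val + 1 = i.val ∨ i.val + 1 = j.val := by
  rw [mem_closedNbhd, pathGraph_adj, Fin.ext_iff]

/-- The identifying code of the path with `m ≥ 3` vertices `0, …, m - 1` that consists of the even
vertices and, for even `m`, of `m - 3`. -/
def pathCode (m : ℕ) : Set (Fin m) :=
  {i | Even i.val ∨ Even m ∧ i.val + 3 = m}

theorem ncard_pathCode_le (m : ℕ) : (pathCode m).ncard ≤ m / 2 + 1 := by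
  -- For even `m`, no even vertex is labelled `m / 2`, so this label is free for `m - 3`.
  let label (i : Fin m) : ℕ := if Even i.val then i.val / 2 else m / 2
  have hmaps : Set.MapsTo label (pathCode m) (Finset.range (m / 2 + 1)) := by
    intro i _
    simp only [label, Finset.coe_range, Set.mem_Iio]
    split <;> omega
  have hinj : Set.InjOn label (pathCode m) := by
    intro i hi j hj hij
    simp only [label, pathCode, Set.mem_ofPred_eq, Nat.even_iff] at hi hj hij
    grind
  simpa only [Set.ncard_coe_finset, Finset.card_range] using
    Set.ncard_le_ncard_of_injOn label hmaps hinj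

theorem isDomSet_pathCode (m : ℕ) : IsDomSet (pathGraph m) (pathCode m) := by
  intro i
  by_cases hi : Even i.val
  · exact ⟨i, mem_closedNbhd_pathGraph.2 (.inl rfl), .inl hi⟩
  · have hodd : i.val % 2 = 1 := Nat.not_even_iff.1 hi
    exact ⟨⟨i.val - 1, by omega⟩, mem_closedNbhd_pathGraph.2 (by grind), .inl (by grind)⟩

theorem SameTrace.pathGraph_val_iff {C : Set (Fin m)} {a b : Fin m}
    (h : SameTrace (pathGraph m) C a b) {x : ℕ} (hx : x < m) (hxC : ⟨x, hx⟩ ∈ C) :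
    (x = a.val ∨ a.val + 1 = x ∨ x + 1 = a.val) ↔
      (x = b.val ∨ b.val + 1 = x ∨ x + 1 = b.val) := by
  simpa only [mem_closedNbhd_pathGraph] using h ⟨x, hx⟩ hxC

theorem not_sameTrace_pathCode_of_even_of_odd (hm : 3 ≤ m) {a b : Fin m} (ha : Even a.val)
    (hb : Odd b.val) : ¬SameTrace (pathGraph m) (pathCode m) a b := by
  intro h
  obtain ⟨r, hr⟩ := ha
  obtain ⟨s, hs⟩ := hb
  have hpred := h.pathGraph_val_iff (x := b.val - 1) (by omega) (.inl ⟨s, by dsimp only; omega⟩)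
  have hab : a.val + 1 = b.val := by omega
  have hlast : b.val + 1 = m := by
    by_contra hne
    have hsucc := h.pathGraph_val_iff (x := b.val + 1) (by omega)
      (.inl ⟨s + 1, by dsimp only; omega⟩)
    omega
  have hextra := h.pathGraph_val_iff (x := m - 3) (by omega)
    (.inr ⟨⟨s + 1, by omega⟩, by dsimp only; omega⟩)
  omega

theorem eq_of_sameTrace_pathCode (hm : 3 ≤ m) {a b : Fin m}
    (h : SameTrace (pathGraph m) (pathCode m) a b) : a = b := by
  apply Fin.ext
  obtain ha | ha := Nat.even_or_odd a.val <;> obtain hb | hb := Nat.even_or_odd b.val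
  · have hself := h.pathGraph_val_iff a.isLt (.inl ha)
    obtain ⟨r, hr⟩ := ha
    obtain ⟨s, hs⟩ := hb
    omega
  · exact (not_sameTrace_pathCode_of_even_of_odd hm ha hb h).elim
  · exact (not_sameTrace_pathCode_of_even_of_odd hm hb ha h.symm).elim
  · obtain ⟨r, hr⟩ := ha
    obtain ⟨s, hs⟩ := hb
    have hpred_a := h.pathGraph_val_iff (x := a.val - 1) (by omega) (.inl ⟨r, by dsimp only; omega⟩)
    have hpred_b := h.pathGraph_val_iff (x := b.val - 1) (by omega) (.inl ⟨s, by dsimp only; omega⟩)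
    omega

theorem isIDCode_pathCode (hm : 3 ≤ m) : IsIDCode (pathGraph m) (pathCode m) :=
  isIDCode_iff.2 ⟨isDomSet_pathCode m, fun _ _ => eq_of_sameTrace_pathCode hm⟩

theorem idNum_appendStar_pathGraph_le (hm : 3 ≤ m) (hk : 2 ≤ k) (v : Fin m) :
    idNum (appendStar (pathGraph m) v k) ≤ m / 2 + 1 + k :=
  ((isIDCode_pathCode hm).idNum_appendStar_le hk v).trans
    (Nat.add_le_add_right (ncard_pathCode_le m) k)

theorem idNum_appendStar_pathGraph_two_le (hk : 2 ≤ k) (v : Fin 2) :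
    idNum (appendStar (pathGraph 2) v k) ≤ 1 + k := by
  have hdom : IsDomSet (pathGraph 2) {v} :=
    fun i => ⟨v, mem_closedNbhd_pathGraph.2 (by omega), rfl⟩
  have hbound := hdom.idNum_appendStar_le rfl (fun x y hx hy _ => by omega) hk
  rwa [Set.ncard_singleton] at hbound

theorem idNum_appendStar_pathGraph_four_le (hk : 2 ≤ k) {v : Fin 4} (hv : v = 1 ∨ v = 2) :
    idNum (appendStar (pathGraph 4) v k) ≤ 2 + k := by
  have hdom : IsDomSet (pathGraph 4) {1, 2} := fun i => by
    obtain hi | hi : i.val ≤ 1 ∨ 2 ≤ i.val := by omega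
    · exact ⟨1, mem_closedNbhd_pathGraph.2 (by omega), by simp⟩
    · exact ⟨2, mem_closedNbhd_pathGraph.2 (by omega), by simp⟩
  have hsep (x y : Fin 4) (hx : x ≠ v) (hy : y ≠ v)
      (h : SameTrace (pathGraph 4) {1, 2} x y) : x = y := by
    have h1 := h.pathGraph_val_iff (x := 1) (by omega) (by simp)
    have h2 := h.pathGraph_val_iff (x := 2) (by omega) (by simp)
    omega
  have hbound := hdom.idNum_appendStar_le hv hsep hk
  rwa [Set.ncard_pair (by decide)] at hbound

end Path

theorem cast_le_div_mul_add {c N m Δ : ℕ} (hΔ : 0 < Δ) (hc : c ≤ N + (Δ - 1))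
    (hN : Δ * N ≤ (Δ - 1) * m) :
    (c : ℝ) ≤ ((Δ : ℝ) - 1) / Δ * ((m : ℝ) + (Δ : ℝ)) := by
  have hc' : (c : ℝ) ≤ N + (Δ - 1) := by
    rw [← Nat.cast_pred hΔ]
    exact_mod_cast hc
  have hN' : (Δ : ℝ) * N ≤ (Δ - 1) * m := by
    rw [← Nat.cast_pred hΔ]
    exact_mod_cast hN
  have hpos : (0 : ℝ) < Δ := by exact_mod_cast hΔ
  calc (c : ℝ) ≤ N + (Δ - 1) := hc'
    _ ≤ (Δ - 1) * m / Δ + (Δ - 1) := by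
      gcongr
      rwa [le_div_iff₀' hpos]
    _ = (Δ - 1) / Δ * (m + Δ) := by field_simp

theorem mul_half_add_one_le {m Δ : ℕ} (hm : 3 ≤ m) (hΔ : 3 ≤ Δ) (h : ¬(m = 4 ∧ Δ = 3)) :
    Δ * (m / 2 + 1) ≤ (Δ - 1) * m := by
  obtain rfl | hm4 := eq_or_ne m 4
  · omega
  · obtain ⟨d, rfl⟩ := Nat.exists_eq_add_of_le hΔ
    calc (3 + d) * (m / 2 + 1) = 3 * (m / 2 + 1) + d * (m / 2 + 1) := by ring
      _ ≤ 2 * m + d * m := add_le_add (by omega) (Nat.mul_le_mul_left d (by omega))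
      _ = (3 + d - 1) * m := by rw [show 3 + d - 1 = 2 + d by omega, add_mul]

/-- let `G` be the tree on `n = m + Δ` vertices obtained from the path
`p₁ … p_m` (`m ≥ 2`) by appending a `Δ`-star (`Δ ≥ 3`) by one of its leaves onto
`p_k`. If `m ≠ 4`, or `m = 4` and `2 ≤ k ≤ 3`, or `m = 4`, `k ∈ {1, 4}` and `Δ ≥ 4`,
then `γ^ID(G) ≤ ((Δ−1)/Δ)·n`. -/
theorem stmt_9 (m Δ k : ℕ) (hm : 2 ≤ m) (hΔ : 3 ≤ Δ) (hk1 : 1 ≤ k) (hkm : k ≤ m)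
    (hcond : m ≠ 4 ∨ (m = 4 ∧ 2 ≤ k ∧ k ≤ 3) ∨ (m = 4 ∧ (k = 1 ∨ k = 4) ∧ 4 ≤ Δ)) :
    (idNum (appendStar (SimpleGraph.pathGraph m) ⟨k - 1, by omega⟩ (Δ - 1)) : ℝ) ≤
      ((Δ : ℝ) - 1) / Δ * ((m : ℝ) + (Δ : ℝ)) := by
  have hpos : 0 < Δ := by omega
  have hleaves : 2 ≤ Δ - 1 := by omega
  obtain rfl | hm3 := hm.eq_or_lt
  · exact cast_le_div_mul_add hpos (idNum_appendStar_pathGraph_two_le hleaves _) (by omega)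
  by_cases hexc : m = 4 ∧ Δ = 3
  · obtain ⟨rfl, rfl⟩ := hexc
    have hv : (⟨k - 1, by omega⟩ : Fin 4) = 1 ∨ (⟨k - 1, by omega⟩ : Fin 4) = 2 := by
      simp only [Fin.ext_iff]
      omega
    exact cast_le_div_mul_add hpos (idNum_appendStar_pathGraph_four_le hleaves hv) (by norm_num)
  · exact cast_le_div_mul_add hpos (idNum_appendStar_pathGraph_le hm3 hleaves _)
      (mul_half_add_one_le hm3 hΔ hexc)
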